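/- Let m ∈ ℤ≥0, λ ∈ ℤ, and y, u, ℓ ∈ ℤ≥0 with ℓ + y + 2u ≤ 2m + 1. Then S′(y,u,ℓ,λ) = −T(2m+3−2λ−2ℓ−4u−y, u, ℓ), where S′(y,u,ℓ,λ) = Σ_{0 ≤ n ≤ 2m, n even} Σ_{c,e,r ≥ 0, c+e+r=u} q^{(u+y−n)(ℓ+u−1)} C_q(ℓ, −u−y−e+c+n) C_q(2m+3−2λ−5u−3ℓ−2y−e+c+n, r) C_{q²}(m−λ−2u−ℓ−y+c+1+n/2, c) C_{q²}(m+1−λ−2ℓ−y−3u+n/2+c, e) − Σ_{1 ≤ n ≤ 2m+1, n odd} Σ_{c,e,r ≥ 0, c+e+r=u} q^{(u+y−n)(ℓ+u−1)+c−e} C_q(ℓ, −u−y−e+c+n) C_q(2m+3−2λ−5u−3ℓ−2y−e+c+n, r) C_{q²}(m−λ−2u−ℓ−y+c+(n+1)/2, c) C_{q²}(m+1−λ−2ℓ−y−3u+(n+1)/2+c, e). -/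

import Mathlib

open Finset

noncomputable section

/-- The field `ℚ(q)` of rational functions over `ℚ`. -/
abbrev F : Type := RatFunc ℚ

/-- The indeterminate `q`. -/
noncomputable def qq : F := RatFunc.X

/-- The quantum integer `[n]` with base `v`: `(v^n - v^(-n))/(v - v⁻¹)`. -/
noncomputable def qint (v : F) (n : ℤ) : F := (v ^ n - v ^ (-n)) / (v - v⁻¹)

/-- The quantum factorial `[m]! = [1][2]⋯[m]` with base `v`. -/
noncomputable def qfact (v : F) (m : ℕ) : F := ∏ k ∈ range m, qint v ((k : ℤ) + 1)

/-- The quantum binomial coefficient `C_v(n,d) = [n][n-1]⋯[n-d+1]/[d]!` for `d ≥ 0`,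
and `0` for `d < 0`. -/
noncomputable def qbinom (v : F) (n d : ℤ) : F :=
  if d < 0 then 0
  else (∏ k ∈ range d.toNat, qint v (n - (k : ℤ))) / qfact v d.toNat

/-- The function `T(w,u,ℓ)` of [CLW, (3.14)]. -/
noncomputable def T (w : ℤ) (u ℓ : ℕ) : F :=
  (∑ c ∈ range (u + 1), ∑ e ∈ range (u + 1 - c), ∑ t ∈ range (ℓ + 1),
      (let r : ℕ := u - c - e;
       if Even ((t : ℤ) + w - (r : ℤ)) then
         qq ^ (-(t : ℤ) * ((ℓ : ℤ) + (u : ℤ) - 1) + ((ℓ : ℤ) + (u : ℤ)) * ((c : ℤ) - (e : ℤ)))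
           * qbinom qq (ℓ : ℤ) (t : ℤ) * qbinom qq (w + (t : ℤ) - (ℓ : ℤ)) (r : ℤ)
           * qbinom (qq ^ 2) ((u : ℤ) - 1 + (w + (t : ℤ) - (r : ℤ)) / 2) (c : ℤ)
           * qbinom (qq ^ 2) ((w + (t : ℤ) - (r : ℤ)) / 2 - (ℓ : ℤ)) (e : ℤ)
       else 0))
  - (∑ c ∈ range (u + 1), ∑ e ∈ range (u + 1 - c), ∑ t ∈ range (ℓ + 1),
      (let r : ℕ := u - c - e;
       if ¬ Even ((t : ℤ) + w - (r : ℤ)) then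
         qq ^ (-(t : ℤ) * ((ℓ : ℤ) + (u : ℤ) - 1) + ((ℓ : ℤ) + (u : ℤ) - 1) * ((c : ℤ) - (e : ℤ)))
           * qbinom qq (ℓ : ℤ) (t : ℤ) * qbinom qq (w + (t : ℤ) - (ℓ : ℤ)) (r : ℤ)
           * qbinom (qq ^ 2) ((u : ℤ) + (w + (t : ℤ) - (r : ℤ) - 1) / 2) (c : ℤ)
           * qbinom (qq ^ 2) ((w + (t : ℤ) - (r : ℤ) - 1) / 2 - (ℓ : ℤ)) (e : ℤ)
       else 0))

/-- The function `S'(y,u,ℓ,λ)` of [CLW, (A.3)] (depending also on `m`). -/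
noncomputable def Sp (m : ℕ) (lmd : ℤ) (y u ℓ : ℕ) : F :=
  (∑ n ∈ range (2 * m + 2), ∑ c ∈ range (u + 1), ∑ e ∈ range (u + 1 - c),
      (let r : ℕ := u - c - e;
       if Even n then
         qq ^ (((u : ℤ) + (y : ℤ) - (n : ℤ)) * ((ℓ : ℤ) + (u : ℤ) - 1))
           * qbinom qq (ℓ : ℤ) (-(u : ℤ) - (y : ℤ) - (e : ℤ) + (c : ℤ) + (n : ℤ))
           * qbinom qq (2 * (m : ℤ) + 3 - 2 * lmd - 5 * (u : ℤ) - 3 * (ℓ : ℤ) - 2 * (y : ℤ)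
               - (e : ℤ) + (c : ℤ) + (n : ℤ)) (r : ℤ)
           * qbinom (qq ^ 2) ((m : ℤ) - lmd - 2 * (u : ℤ) - (ℓ : ℤ) - (y : ℤ) + (c : ℤ) + 1
               + (n : ℤ) / 2) (c : ℤ)
           * qbinom (qq ^ 2) ((m : ℤ) + 1 - lmd - 2 * (ℓ : ℤ) - (y : ℤ) - 3 * (u : ℤ)
               + (n : ℤ) / 2 + (c : ℤ)) (e : ℤ)
       else 0))
  - (∑ n ∈ range (2 * m + 2), ∑ c ∈ range (u + 1), ∑ e ∈ range (u + 1 - c),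
      (let r : ℕ := u - c - e;
       if ¬ Even n then
         qq ^ (((u : ℤ) + (y : ℤ) - (n : ℤ)) * ((ℓ : ℤ) + (u : ℤ) - 1) + (c : ℤ) - (e : ℤ))
           * qbinom qq (ℓ : ℤ) (-(u : ℤ) - (y : ℤ) - (e : ℤ) + (c : ℤ) + (n : ℤ))
           * qbinom qq (2 * (m : ℤ) + 3 - 2 * lmd - 5 * (u : ℤ) - 3 * (ℓ : ℤ) - 2 * (y : ℤ)
               - (e : ℤ) + (c : ℤ) + (n : ℤ)) (r : ℤ)
           * qbinom (qq ^ 2) ((m : ℤ) - lmd - 2 * (u : ℤ) - (ℓ : ℤ) - (y : ℤ) + (c : ℤ)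
               + ((n : ℤ) + 1) / 2) (c : ℤ)
           * qbinom (qq ^ 2) ((m : ℤ) + 1 - lmd - 2 * (ℓ : ℤ) - (y : ℤ) - 3 * (u : ℤ)
               + ((n : ℤ) + 1) / 2 + (c : ℤ)) (e : ℤ)
       else 0))

theorem qint_zero' (v : F) : qint v 0 = 0 := by simp [qint]

theorem qbinom_neg (v : F) (n d : ℤ) (h : d < 0) : qbinom v n d = 0 := by simp [qbinom, h]

theorem qbinom_gt (v : F) (l : ℕ) (d : ℤ) (h : (l : ℤ) < d) : qbinom v l d = 0 := by
  have h1 : ¬ d < 0 := by omega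
  have h2 : ∏ k ∈ range d.toNat, qint v ((l : ℤ) - (k : ℤ)) = 0 := by
    refine Finset.prod_eq_zero (i := l) (Finset.mem_range.2 (by omega)) ?_
    simp [qint]
  simp [qbinom, h1, h2]

theorem sum_shift (f g : ℕ → F) (k l N : ℕ) (hk : k + l + 1 ≤ N)
    (hfg : ∀ t, t ≤ l → f (t + k) = g t)
    (h0 : ∀ n, n < k ∨ k + l < n → f n = 0) :
    ∑ n ∈ range N, f n = ∑ t ∈ range (l + 1), g t := by
  symm
  refine Finset.sum_bij_ne_zero (fun t _ _ => t + k) ?_ ?_ ?_ ?_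
  · intro t ht _
    simp only [Finset.mem_range] at *
    omega
  · intro a _ _ b _ _ hab
    simpa using hab
  · intro n hn hne
    by_cases hc : n < k ∨ k + l < n
    · exact absurd (h0 n hc) hne
    · have e : n - k + k = n := by omega
      refine ⟨n - k, Finset.mem_range.2 (by omega), ?_, e⟩
      rw [← hfg _ (by omega), e]
      exact hne
  · intro t ht _
    exact (hfg t (by simp only [Finset.mem_range] at ht; omega)).symm

/-- `S'(y,u,ℓ,λ) = −T(2m+3−2λ−2ℓ−4u−y, u, ℓ)` for `ℓ + y + 2u ≤ 2m + 1`. -/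
theorem Sp_eq_negT (m : ℕ) (lmd : ℤ) (y u ℓ : ℕ) (h : ℓ + y + 2 * u ≤ 2 * m + 1) :
    Sp m lmd y u ℓ
      = -T (2 * (m : ℤ) + 3 - 2 * lmd - 2 * (ℓ : ℤ) - 4 * (u : ℤ) - (y : ℤ)) u ℓ := by
  unfold Sp T
  rw [neg_sub]
  congr 1
  · rw [Finset.sum_comm]
    refine Finset.sum_congr rfl fun c hc => ?_
    rw [Finset.sum_comm]
    refine Finset.sum_congr rfl fun e he => ?_
    simp only [Finset.mem_range] at hc he
    refine sum_shift _ _ (u + y + e - c) ℓ _ (by omega) ?_ ?_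
    · intro t ht
      have hk : ((t + (u + y + e - c) : ℕ) : ℤ) = t + u + y + e - c := by omega
      have hr : ((u - c - e : ℕ) : ℤ) = u - c - e := by omega
      dsimp only
      rw [hk, hr]
      have hpar : (Even (t + (u + y + e - c))) ↔ ¬ Even ((t : ℤ) + (2 * (m : ℤ) + 3 - 2 * lmd - 2 * (ℓ : ℤ) - 4 * (u : ℤ) - (y : ℤ)) - ((u : ℤ) - c - e)) := by
        rw [← Int.even_coe_nat, hk]
        simp only [Int.even_iff]
        omega
      by_cases hev : Even (t + (u + y + e - c))
      · rw [if_pos hev, if_pos (hpar.1 hev)]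
        rw [← Int.even_coe_nat, hk] at hev
        simp only [Int.even_iff] at hev
        congr 1
        · congr 1
          · congr 1
            · congr 1
              · congr 1
                ring
              · congr 1
                ring
            · congr 1
              ring
          · congr 1
            omega
        · congr 1
          omega
      · rw [if_neg hev, if_neg (fun h' => hev (hpar.2 h'))]
    · intro n hn
      dsimp only
      have hz : qbinom qq (ℓ : ℤ) (-(u : ℤ) - (y : ℤ) - (e : ℤ) + (c : ℤ) + (n : ℤ)) = 0 := by
        rcases hn with hn | hn
        · exact qbinom_neg _ _ _ (by omega)
        · exact qbinom_gt _ _ _ (by omega)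
      simp only [hz, mul_zero, zero_mul, ite_self]
  · rw [Finset.sum_comm]
    refine Finset.sum_congr rfl fun c hc => ?_
    rw [Finset.sum_comm]
    refine Finset.sum_congr rfl fun e he => ?_
    simp only [Finset.mem_range] at hc he
    refine sum_shift _ _ (u + y + e - c) ℓ _ (by omega) ?_ ?_
    · intro t ht
      have hk : ((t + (u + y + e - c) : ℕ) : ℤ) = t + u + y + e - c := by omega
      have hr : ((u - c - e : ℕ) : ℤ) = u - c - e := by omega
      dsimp only
      rw [hk, hr]
      have hpar : (¬ Even (t + (u + y + e - c))) ↔ Even ((t : ℤ) + (2 * (m : ℤ) + 3 - 2 * lmd - 2 * (ℓ : ℤ) - 4 * (u : ℤ) - (y : ℤ)) - ((u : ℤ) - c - e)) := by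
        rw [← Int.even_coe_nat, hk]
        simp only [Int.even_iff]
        omega
      by_cases hev : ¬ Even (t + (u + y + e - c))
      · rw [if_pos hev, if_pos (hpar.1 hev)]
        rw [← Int.even_coe_nat, hk] at hev
        simp only [Int.even_iff] at hev
        congr 1
        · congr 1
          · congr 1
            · congr 1
              · congr 1
                ring
              · congr 1
                ring
            · congr 1
              ring
          · congr 1
            omega
        · congr 1
          omega
      · rw [if_neg hev, if_neg (fun h' => hev (hpar.2 h'))]
    · intro n hn
      dsimp only
      have hz : qbinom qq (ℓ : ℤ) (-(u : ℤ) - (y : ℤ) - (e : ℤ) + (c : ℤ) + (n : ℤ)) = 0 := by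
        rcases hn with hn | hn
        · exact qbinom_neg _ _ _ (by omega)
        · exact qbinom_gt _ _ _ (by omega)
      simp only [hz, mul_zero, zero_mul, ite_self]

end
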